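/- arXiv:0906.0392 — 11 statements merged into one kernel-verified Lean document; each statement's English description precedes it below -/
import Mathlib

section
/- Let s ≥ −1 be a real number. Then every complex zero of the entire function Φ_s(z) = z·cos z + s·sin z is real; that is, if z ∈ ℂ satisfies z·cos z + s·sin z = 0, then z is a real number. -/
/-!
Write `z = x + iy` and split the equation into real and imaginary parts. Eliminating `s` from the
two resulting real equations gives `x · sinh (2y) = y · sin (2x)`. For `y ≠ 0` the strict inequality
`|sinh (2y)| > |2y|` together with `|sin (2x)| ≤ |2x|` forces `x = 0`, so `z = iy` and the equation
reduces to `y cosh y = -s sinh y`. Since `-s ≤ 1`, this contradicts `sinh y < y cosh y` for `y > 0`.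
The symmetry `z ↦ -z` reduces everything to the case `y > 0`.
-/

/-- The inequality `tanh y < y` for `y > 0`, cleared of denominators. -/
lemma sinh_lt_self_mul_cosh {y : ℝ} (hy : 0 < y) : Real.sinh y < y * Real.cosh y := by
  have hd : ∀ t : ℝ, HasDerivAt (fun t => t * Real.cosh t - Real.sinh t) (t * Real.sinh t) t := by
    intro t
    have h := ((hasDerivAt_id t).mul (Real.hasDerivAt_cosh t)).sub (Real.hasDerivAt_sinh t)
    have he : 1 * Real.cosh t + id t * Real.sinh t - Real.cosh t = t * Real.sinh t := by
      simp
    exact he ▸ h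
  have hmono : StrictMonoOn (fun t => t * Real.cosh t - Real.sinh t) (Set.Ici 0) := by
    apply strictMonoOn_of_deriv_pos (convex_Ici 0)
    · fun_prop
    · intro t ht
      rw [interior_Ici, Set.mem_Ioi] at ht
      rw [(hd t).deriv]
      exact mul_pos ht (Real.sinh_pos_iff.2 ht)
  have h := hmono (Set.mem_Ici.2 le_rfl) (Set.mem_Ici.2 hy.le) hy
  simp only [Real.sinh_zero, zero_mul, sub_zero] at h
  linarith

/-- `Φ_s` has no zero `x + iy` in the open upper half-plane; `hre` and `him` say that the real and
imaginary parts of `Φ_s(x + iy)` vanish. -/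
lemma no_zero_of_im_pos {s x y : ℝ} (hs : -1 ≤ s) (hy : 0 < y)
    (hre : x * (Real.cos x * Real.cosh y) + y * (Real.sin x * Real.sinh y)
      + s * (Real.sin x * Real.cosh y) = 0)
    (him : y * (Real.cos x * Real.cosh y) - x * (Real.sin x * Real.sinh y)
      + s * (Real.cos x * Real.sinh y) = 0) : False := by
  have hS : 0 < Real.sinh y := Real.sinh_pos_iff.2 hy
  have helim : x * Real.sinh (2 * y) = y * Real.sin (2 * x) := by
    rw [Real.sinh_two_mul, Real.sin_two_mul]
    linear_combination 2 * (Real.cos x * Real.sinh y) * hre - 2 * (Real.sin x * Real.cosh y) * him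
      - 2 * x * Real.sinh y * Real.cosh y * Real.sin_sq_add_cos_sq x
      + 2 * y * Real.sin x * Real.cos x * Real.cosh_sq y
  have hx : x = 0 := by
    by_contra hx
    have hlt : 2 * y < Real.sinh (2 * y) := Real.self_lt_sinh_iff.2 (by linarith)
    have hsin : |Real.sin (2 * x)| ≤ 2 * |x| := by
      simpa [abs_mul] using Real.abs_sin_le_abs (x := 2 * x)
    have habs := congrArg abs helim
    rw [abs_mul, abs_mul, abs_of_pos hy, abs_of_pos (by linarith : 0 < Real.sinh (2 * y))] at habs
    have h1 := mul_lt_mul_of_pos_left hlt (abs_pos.2 hx)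
    have h2 := mul_le_mul_of_nonneg_left hsin hy.le
    linarith
  subst hx
  simp only [Real.cos_zero, Real.sin_zero] at him
  nlinarith [sinh_lt_self_mul_cosh hy]

/-- Every complex zero of the entire function `Φ_s(z) = z·cos z + s·sin z`, for real
`s ≥ -1`, is real. -/
theorem zeros_of_zcosz_add_s_sinz_are_real (s : ℝ) (hs : -1 ≤ s) (z : ℂ)
    (hz : z * Complex.cos z + (s : ℂ) * Complex.sin z = 0) : z.im = 0 := by
  have key : ∀ w : ℂ, w * Complex.cos w + (s : ℂ) * Complex.sin w = 0 → ¬ 0 < w.im := by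
    intro w hw hpos
    rw [Complex.cos_eq w, Complex.sin_eq w] at hw
    simp only [← Complex.ofReal_cos, ← Complex.ofReal_sin, ← Complex.ofReal_cosh,
      ← Complex.ofReal_sinh] at hw
    have hre := congrArg Complex.re hw
    have him := congrArg Complex.im hw
    simp only [Complex.add_re, Complex.add_im, Complex.sub_re, Complex.sub_im, Complex.mul_re,
      Complex.mul_im, Complex.ofReal_re, Complex.ofReal_im, Complex.I_re, Complex.I_im,
      Complex.zero_re, Complex.zero_im] at hre him
    exact no_zero_of_im_pos (x := w.re) hs hpos (by linear_combination hre)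
      (by linear_combination him)
  refine le_antisymm (not_lt.1 (key z hz)) (not_lt.1 fun hneg => key (-z) ?_ ?_)
  · rw [Complex.cos_neg, Complex.sin_neg]
    linear_combination -hz
  · simpa using hneg
end

section
/- The function φ(u) = −u·cos u / sin u is continuous and strictly increasing on the interval (π/2, π) and maps (π/2, π) bijectively onto (0, ∞). Moreover, for every s > 0 the smallest positive zero r_s of Φ_s(x) = x·cos x + s·sin x satisfies r_s = φ⁻¹(s); consequently, the map s ↦ r_s is strictly increasing on (0, ∞). -/
/-!
On `(π/2, π)` the factors `u` and `-cos u` are positive and increasing while `sin u` is positive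
and decreasing, so `φ u = u * (-cos u) / sin u` is strictly increasing. As `sin ≠ 0` there,
`φ u = s` is equivalent to `u * cos u + s * sin u = 0` (`phi_eq_iff`). For `s > 0` this expression
equals `s > 0` at `π/2` and `-π < 0` at `π`, so by the intermediate value theorem it vanishes
somewhere in between (`exists_zero`), which gives surjectivity onto `(0, ∞)`. It is positive on
`(0, π/2]`, so the smallest positive zero lies in `(π/2, π)` and is a preimage of `s` under `φ`.
Its monotonicity in `s` is then that of `φ`.
-/

open Real Set

theorem sin_pos_of_mem {u : ℝ} (hu : u ∈ Ioo (π / 2) π) : 0 < sin u :=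
  sin_pos_of_pos_of_lt_pi (by linarith [hu.1, pi_pos]) hu.2

theorem cos_neg_of_mem {u : ℝ} (hu : u ∈ Ioo (π / 2) π) : cos u < 0 :=
  cos_neg_of_pi_div_two_lt_of_lt hu.1 (by linarith [hu.2, pi_pos])

theorem phi_eq_iff {u : ℝ} (hu : u ∈ Ioo (π / 2) π) (s : ℝ) :
    -u * cos u / sin u = s ↔ u * cos u + s * sin u = 0 := by
  rw [div_eq_iff (sin_pos_of_mem hu).ne']
  constructor <;> intro h <;> linarith

theorem strictMonoOn_phi :
    StrictMonoOn (fun u : ℝ => -u * cos u / sin u) (Ioo (π / 2) π) := by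
  intro x hx y hy hxy
  have hcos : cos y < cos x :=
    strictAntiOn_cos ⟨by linarith [hx.1, pi_pos], hx.2.le⟩ ⟨by linarith [hy.1, pi_pos], hy.2.le⟩ hxy
  have hsin : sin y < sin x := by
    -- The reflection `u ↦ π - u` moves the claim to `(0, π/2)`, where `sin` is increasing.
    rw [← sin_pi_sub y, ← sin_pi_sub x]
    exact sin_lt_sin_of_lt_of_le_pi_div_two (by linarith [hy.2, pi_pos]) (by linarith [hx.1])
      (by linarith)
  have hx0 : 0 < x := by linarith [hx.1, pi_pos]
  have hcx := cos_neg_of_mem hx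
  have hnum : -x * cos x < -y * cos y := by nlinarith
  have hpos : 0 < -y * cos y := by nlinarith [cos_neg_of_mem hy]
  exact div_lt_div₀ hnum hsin.le hpos.le (sin_pos_of_mem hy)

theorem exists_zero {s : ℝ} (hs : 0 < s) :
    ∃ u ∈ Ioo (π / 2) π, u * cos u + s * sin u = 0 := by
  have hc : ContinuousOn (fun u : ℝ => u * cos u + s * sin u) (Icc (π / 2) π) := by fun_prop
  exact intermediate_value_Ioo' (by linarith [pi_pos]) hc
    ⟨by simp [pi_pos], by simpa using hs⟩

theorem isLeast_zero_spec {s r : ℝ} (hs : 0 < s)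
    (hr : IsLeast {x : ℝ | 0 < x ∧ x * cos x + s * sin x = 0} r) :
    r ∈ Ioo (π / 2) π ∧ -r * cos r / sin r = s := by
  obtain ⟨u, hu, hu0⟩ := exists_zero hs
  obtain ⟨⟨hr0, hrz⟩, hmin⟩ := hr
  have hrπ : r < π := (hmin ⟨by linarith [hu.1, pi_pos], hu0⟩).trans_lt hu.2
  have hr2 : π / 2 < r := by
    by_contra! h
    have hcos : 0 ≤ cos r := cos_nonneg_of_neg_pi_div_two_le_of_le (by linarith [pi_pos]) h
    have hsin : 0 < sin r := sin_pos_of_pos_of_lt_pi hr0 hrπ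
    have := mul_nonneg hr0.le hcos
    have := mul_pos hs hsin
    linarith
  exact ⟨⟨hr2, hrπ⟩, (phi_eq_iff ⟨hr2, hrπ⟩ s).2 hrz⟩


/-- The function `φ(u) = −u·cos u / sin u` is continuous and strictly increasing on
`(π/2, π)`, maps `(π/2, π)` bijectively onto `(0, ∞)`; for every `s > 0` the smallest
positive zero `r_s` of `Φ_s(x) = x·cos x + s·sin x` satisfies `φ(r_s) = s` (i.e.
`r_s = φ⁻¹(s)`), and consequently `s ↦ r_s` is strictly increasing on `(0, ∞)`. -/
theorem phi_inverse_of_smallest_zero :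
    ContinuousOn (fun u : ℝ => -u * Real.cos u / Real.sin u)
      (Set.Ioo (Real.pi / 2) Real.pi) ∧
    StrictMonoOn (fun u : ℝ => -u * Real.cos u / Real.sin u)
      (Set.Ioo (Real.pi / 2) Real.pi) ∧
    Set.BijOn (fun u : ℝ => -u * Real.cos u / Real.sin u)
      (Set.Ioo (Real.pi / 2) Real.pi) (Set.Ioi 0) ∧
    (∀ s : ℝ, 0 < s → ∀ r : ℝ,
      IsLeast {x : ℝ | 0 < x ∧ x * Real.cos x + s * Real.sin x = 0} r →
      r ∈ Set.Ioo (Real.pi / 2) Real.pi ∧ -r * Real.cos r / Real.sin r = s) ∧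
    (∀ s₁ s₂ : ℝ, 0 < s₁ → s₁ < s₂ → ∀ r₁ r₂ : ℝ,
      IsLeast {x : ℝ | 0 < x ∧ x * Real.cos x + s₁ * Real.sin x = 0} r₁ →
      IsLeast {x : ℝ | 0 < x ∧ x * Real.cos x + s₂ * Real.sin x = 0} r₂ →
      r₁ < r₂) := by
  refine ⟨?_, strictMonoOn_phi, ⟨?_, strictMonoOn_phi.injOn, ?_⟩,
    fun s hs r hr => isLeast_zero_spec hs hr, ?_⟩
  · exact ContinuousOn.div (by fun_prop) (by fun_prop) fun u hu => (sin_pos_of_mem hu).ne'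
  · intro u hu
    refine div_pos ?_ (sin_pos_of_mem hu)
    nlinarith [cos_neg_of_mem hu, hu.1, pi_pos]
  · intro s hs
    obtain ⟨u, hu, hu0⟩ := exists_zero hs
    exact ⟨u, hu, (phi_eq_iff hu s).2 hu0⟩
  · intro s₁ s₂ h₁ h₁₂ r₁ r₂ hr₁ hr₂
    obtain ⟨hm₁, he₁⟩ := isLeast_zero_spec h₁ hr₁
    obtain ⟨hm₂, he₂⟩ := isLeast_zero_spec (h₁.trans h₁₂) hr₂
    refine (strictMonoOn_phi.lt_iff_lt hm₁ hm₂).1 ?_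
    simpa only [he₁, he₂] using h₁₂
end

section
/- Let r_s denote the smallest positive real zero of Φ_s(x) = x·cos x + s·sin x for s ≥ 0. Then r_s tends to π as s → ∞: lim_{s→∞} r_s = π. -/
/-!
Since `Φ_s(π/2) = s ≥ 0` and `Φ_s(π) = -π < 0`, there is a zero in `[π/2, π]`, while `Φ_s > 0` on
`(0, π/2)`; hence `π/2 ≤ r_s ≤ π`. The equation `s·sin r_s = -r_s·cos r_s ≤ π` combined with
Jordan's inequality `(2/π)(π - r_s) ≤ sin (π - r_s) = sin r_s` gives `π - r_s ≤ π²/(2s)`, and a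
squeeze finishes the proof.
-/

/-- The smallest positive zero `r_s` of `Φ_s(x) = x·cos x + s·sin x` tends to `π` as
`s → ∞`. -/
theorem smallest_zero_tendsto_pi (r : ℝ → ℝ)
    (hr : ∀ s : ℝ, 0 ≤ s →
      IsLeast {x : ℝ | 0 < x ∧ x * Real.cos x + s * Real.sin x = 0} (r s)) :
    Filter.Tendsto r Filter.atTop (nhds Real.pi) := by
  have hpi := Real.pi_pos
  have upper : ∀ s : ℝ, 0 ≤ s → r s ≤ Real.pi := by
    intro s hs
    have hcont : ContinuousOn (fun x : ℝ => x * Real.cos x + s * Real.sin x)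
        (Set.Icc (Real.pi / 2) Real.pi) := by fun_prop
    have hmem : (0 : ℝ) ∈ Set.Icc (Real.pi * Real.cos Real.pi + s * Real.sin Real.pi)
        (Real.pi / 2 * Real.cos (Real.pi / 2) + s * Real.sin (Real.pi / 2)) := by
      simp [hs, hpi.le]
    obtain ⟨x, hx, hx0⟩ := intermediate_value_Icc' (by linarith) hcont hmem
    exact ((hr s hs).2 ⟨by linarith [hx.1], hx0⟩).trans hx.2
  have half : ∀ s : ℝ, 0 ≤ s → Real.pi / 2 ≤ r s := by
    intro s hs
    obtain ⟨hpos, heq⟩ := (hr s hs).1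
    by_contra! h
    have hcos := Real.cos_pos_of_mem_Ioo ⟨by linarith, h⟩
    have hsin := Real.sin_pos_of_pos_of_lt_pi hpos (by linarith)
    have := mul_pos hpos hcos
    have := mul_nonneg hs hsin.le
    linarith
  have lower : ∀ s : ℝ, 0 < s → Real.pi - Real.pi ^ 2 / 2 / s ≤ r s := by
    intro s hs
    obtain ⟨hpos, heq⟩ := (hr s hs.le).1
    have hu := upper s hs.le
    have jordan := Real.mul_le_sin (x := Real.pi - r s) (by linarith)
      (by linarith [half s hs.le])
    rw [Real.sin_pi_sub] at jordan
    have hsin : s * Real.sin (r s) ≤ Real.pi := by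
      nlinarith [Real.neg_one_le_cos (r s)]
    have h1 : s * (2 / Real.pi * (Real.pi - r s)) ≤ Real.pi :=
      (mul_le_mul_of_nonneg_left jordan hs.le).trans hsin
    have h2 : s * (2 / Real.pi * (Real.pi - r s)) = s * 2 * (Real.pi - r s) / Real.pi := by
      ring
    rw [h2, div_le_iff₀ hpi] at h1
    have h3 : Real.pi - r s ≤ Real.pi ^ 2 / 2 / s := by
      rw [le_div_iff₀ hs]
      linarith
    linarith
  have hlim : Filter.Tendsto (fun s : ℝ => Real.pi - Real.pi ^ 2 / 2 / s) Filter.atTop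
      (nhds Real.pi) := by
    simpa using (tendsto_const_nhds (x := Real.pi)).sub
      (Filter.Tendsto.const_div_atTop Filter.tendsto_id (Real.pi ^ 2 / 2))
  refine tendsto_of_tendsto_of_tendsto_of_le_of_le' hlim tendsto_const_nhds ?_ ?_
  · filter_upwards [Filter.eventually_gt_atTop 0] with s hs using lower s hs
  · filter_upwards [Filter.eventually_ge_atTop 0] with s hs using upper s hs
end

section
/- For every real s > 0, the smallest positive zero r_s of Φ_s(x) = x·cos x + s·sin x satisfies: sin(r_s) > 0, cos(r_s) < 0, and Φ_s′(r_s) = (1 + s)·cos(r_s) − r_s·sin(r_s) < 0. -/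
/-- For `s > 0`, the smallest positive zero `r_s` of `Φ_s(x) = x·cos x + s·sin x` satisfies
`sin r_s > 0`, `cos r_s < 0`, and `Φ_s′(r_s) = (1+s)·cos r_s − r_s·sin r_s < 0`. -/
theorem signs_at_smallest_zero (s : ℝ) (hs : 0 < s) (r : ℝ)
    (hr : IsLeast {x : ℝ | 0 < x ∧ x * Real.cos x + s * Real.sin x = 0} r) :
    0 < Real.sin r ∧ Real.cos r < 0 ∧ (1 + s) * Real.cos r - r * Real.sin r < 0 := by
  obtain ⟨⟨hr0, hz⟩, hmin⟩ := hr
  have hpi := Real.pi_pos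
  -- `Φ_s(π/2) = s > 0 > -π = Φ_s(π)`, so `Φ_s` vanishes somewhere in `(π/2, π)`.
  have hrpi : r < Real.pi := by
    have hc : ContinuousOn (fun x : ℝ => x * Real.cos x + s * Real.sin x)
        (Set.Icc (Real.pi / 2) Real.pi) := by fun_prop
    obtain ⟨x, hx, hx0⟩ := intermediate_value_Ioo' (by linarith) hc
      (show (0 : ℝ) ∈ Set.Ioo _ _ by constructor <;> simp [hs, hpi])
    exact (hmin ⟨by linarith [hx.1], hx0⟩).trans_lt hx.2
  have hsin : 0 < Real.sin r := Real.sin_pos_of_pos_of_lt_pi hr0 hrpi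
  -- The equation `r cos r = -s sin r` now fixes the sign of `cos r`.
  have hcos : Real.cos r < 0 := by
    by_contra! h
    linarith [mul_nonneg hr0.le h, mul_pos hs hsin]
  refine ⟨hsin, hcos, ?_⟩
  linarith [mul_neg_of_pos_of_neg (show 0 < 1 + s by linarith) hcos, mul_pos hr0 hsin]
end

section
/- Let a < b be real numbers, let Φ, ψ : [a, b] → ℝ be infinitely differentiable, and suppose there exists x₀ ∈ (a, b) such that Φ′(x₀) = 0, Φ″(x₀) > 0, and Φ(x) > Φ(x₀) for every x ∈ [a, b] with x ≠ x₀. Then, as s → ∞ (s > 0), ∫ₐᵇ e^{−s·Φ(x)}·ψ(x) dx = e^{−s·Φ(x₀)}·[A·s^{−1/2} + O(s^{−1})], where A = √(2π)·ψ(x₀)·(Φ″(x₀))^{−1/2}. -/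
/-!
Write `y = x - x₀`, `c = Φ''(x₀)` and `h = Φ - Φ(x₀)`. The proof compares the integrand
`e^{-s h} ψ`, extended by zero outside `[a, b]`, with the Gaussian `ψ(x₀) e^{-s c y² / 2}`
pointwise on the whole line.

On `[a, b]` there are three elementary bounds: `|ψ - ψ(x₀)| ≤ L |y|` and `|h - c y² / 2| ≤ M |y|³`
(`taylor_two_bound`), and, by compactness and strictness of the minimum, `h ≥ k y²` with
`0 < k ≤ c / 2` (`quadratic_lower_bound`). Since `|e^{-u} - e^{-v}| ≤ |u - v| e^{-w}` for
`u, v ≥ w`, the difference of the two functions is at most `(L |y| + |ψ(x₀)| M s |y|³) e^{-s k y²}`,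
and half of the exponential absorbs the factor `s y²`. Outside `[a, b]`, where `|y| ≥ d > 0`,
the Gaussian is itself at most `|ψ(x₀)| (|y| / d) e^{-s k y² / 2}`. Altogether the difference is at
most `K |y| e^{-s k y² / 2}` on `ℝ` (`pointwise_bound`), whose integral is a constant over `s` by
scaling, while the Gaussian integrates exactly to `A s^{-1/2}`.
-/

open MeasureTheory Set

/-- A mean value estimate: integrating a bound `M |x - x₀| ^ n` on the derivative raises the
exponent by one. -/
lemma mvt_pow {a b x₀ M : ℝ} {n : ℕ} {f f' : ℝ → ℝ} (hx₀ : x₀ ∈ Icc a b) (hM : 0 ≤ M)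
    (hf : ∀ x ∈ Icc a b, HasDerivWithinAt f (f' x) (Icc a b) x)
    (hb : ∀ x ∈ Icc a b, |f' x| ≤ M * |x - x₀| ^ n) :
    ∀ x ∈ Icc a b, |f x - f x₀| ≤ M * |x - x₀| ^ (n + 1) := by
  intro x hx
  have hsub : uIcc x₀ x ⊆ Icc a b := uIcc_subset_Icc hx₀ hx
  have := Convex.norm_image_sub_le_of_norm_hasDerivWithin_le (f := f) (f' := f')
    (s := uIcc x₀ x) (x := x₀) (y := x) (C := M * |x - x₀| ^ n)
    (fun z hz => (hf z (hsub hz)).mono hsub)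
    (fun z hz => by
      refine (hb z (hsub hz)).trans ?_
      have : |z - x₀| ≤ |x - x₀| := abs_sub_left_of_mem_uIcc hz
      gcongr)
    (convex_uIcc _ _) left_mem_uIcc right_mem_uIcc
  simpa [Real.norm_eq_abs, pow_succ, mul_assoc] using this

lemma lipschitz_at {a b x₀ : ℝ} (hab : a < b) {f : ℝ → ℝ} (hx₀ : x₀ ∈ Icc a b)
    (hf : ContDiffOn ℝ 1 f (Icc a b)) :
    ∃ L ≥ (0 : ℝ), ∀ x ∈ Icc a b, |f x - f x₀| ≤ L * |x - x₀| := by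
  obtain ⟨B, hB⟩ := isCompact_Icc.exists_bound_of_continuousOn
    (hf.continuousOn_derivWithin (uniqueDiffOn_Icc hab) le_rfl)
  have hB0 : 0 ≤ B := (norm_nonneg _).trans (hB x₀ hx₀)
  refine ⟨B, hB0, fun x hx => ?_⟩
  have := mvt_pow (n := 0) hx₀ hB0
    (fun z hz => ((hf.differentiableOn one_ne_zero) z hz).hasDerivWithinAt)
    (fun z hz => by simpa using hB z hz) x hx
  simpa using this

/-- Second-order Taylor bound at an interior critical point, obtained by integrating the
Lipschitz bound on `Φ''` twice. One-sided derivatives are used at the endpoints, since `Φ` is only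
controlled on `[a, b]`. -/
lemma taylor_two_bound {a b x₀ : ℝ} {Φ : ℝ → ℝ} (hΦ : ContDiffOn ℝ (⊤ : ℕ∞) Φ (Icc a b))
    (hx₀ : x₀ ∈ Ioo a b) (hΦ' : deriv Φ x₀ = 0) :
    ∃ M ≥ (0 : ℝ), ∀ x ∈ Icc a b,
      |Φ x - Φ x₀ - deriv (deriv Φ) x₀ / 2 * (x - x₀) ^ 2| ≤ M * |x - x₀| ^ 3 := by
  have hab : a < b := hx₀.1.trans hx₀.2
  have hu := uniqueDiffOn_Icc hab
  have hx₀' := Ioo_subset_Icc_self hx₀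
  set D := derivWithin Φ (Icc a b) with hD
  set E := derivWithin D (Icc a b) with hE
  have hDs : ContDiffOn ℝ 2 D (Icc a b) :=
    hΦ.derivWithin hu (by norm_cast)
  have hEs : ContDiffOn ℝ 1 E (Icc a b) :=
    hDs.derivWithin hu (by norm_num)
  have hDeq : ∀ x ∈ Ioo a b, D x = deriv Φ x := fun x hx =>
    derivWithin_of_mem_nhds (Icc_mem_nhds hx.1 hx.2)
  have hD0 : D x₀ = 0 := (hDeq x₀ hx₀).trans hΦ'
  have hE0 : E x₀ = deriv (deriv Φ) x₀ := by
    rw [hE, derivWithin_of_mem_nhds (Icc_mem_nhds hx₀.1 hx₀.2)]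
    apply Filter.EventuallyEq.deriv_eq
    filter_upwards [Ioo_mem_nhds hx₀.1 hx₀.2] with x hx using hDeq x hx
  rw [← hE0]
  obtain ⟨M, hM, hL⟩ := lipschitz_at hab hx₀' hEs
  refine ⟨M, hM, ?_⟩
  have h1 : ∀ x ∈ Icc a b, |D x - E x₀ * (x - x₀)| ≤ M * |x - x₀| ^ 2 := by
    intro x hx
    have := mvt_pow (n := 1) (f := fun z => D z - E x₀ * (z - x₀)) (f' := fun z => E z - E x₀)
      hx₀' hM
      (fun z hz => by
        have := ((hDs.differentiableOn two_ne_zero) z hz).hasDerivWithinAt.sub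
          (((hasDerivWithinAt_id z (Icc a b)).sub_const x₀).const_mul (E x₀))
        exact this.congr_deriv (by simp [hE]))
      (fun z hz => by simpa using hL z hz) x hx
    simpa [hD0] using this
  intro x hx
  have := mvt_pow (n := 2) (f := fun z => Φ z - E x₀ / 2 * (z - x₀) ^ 2)
    (f' := fun z => D z - E x₀ * (z - x₀)) hx₀' hM
    (fun z hz => by
      have := ((hΦ.differentiableOn (by simp)) z hz).hasDerivWithinAt.sub
        ((((hasDerivWithinAt_id z (Icc a b)).sub_const x₀).pow 2).const_mul (E x₀ / 2))
      refine this.congr_deriv ?_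
      simp [hD]; ring) h1 x hx
  refine le_trans (le_of_eq ?_) this
  congr 1; simp; ring

/-- The cubic Taylor bound gives the growth near `x₀`; away from `x₀` it comes from compactness. -/
lemma quadratic_lower_bound {a b x₀ c M : ℝ} {Φ : ℝ → ℝ} (hΦ : ContinuousOn Φ (Icc a b))
    (hab : a < b) (hx₀ : x₀ ∈ Icc a b) (hc : 0 < c) (hM : 0 ≤ M)
    (hT : ∀ x ∈ Icc a b, |Φ x - Φ x₀ - c / 2 * (x - x₀) ^ 2| ≤ M * |x - x₀| ^ 3)
    (hmin : ∀ x ∈ Icc a b, x ≠ x₀ → Φ x₀ < Φ x) :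
    ∃ k > (0 : ℝ), k ≤ c / 2 ∧ ∀ x ∈ Icc a b, k * (x - x₀) ^ 2 ≤ Φ x - Φ x₀ := by
  -- For `|x - x₀| < δ` the cubic error is at most `c / 4 * (x - x₀) ^ 2`.
  set δ := c / (4 * (M + 1)) with hδ
  have hδ0 : 0 < δ := by positivity
  have hS : IsCompact (Icc a b ∩ {x | δ ≤ |x - x₀|}) :=
    isCompact_Icc.inter_right (isClosed_le continuous_const (by fun_prop))
  obtain ⟨m, hm, hm'⟩ := hS.exists_forall_le' (hΦ.mono inter_subset_left) (a := Φ x₀)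
    (fun x hx => hmin x hx.1 (by
      rintro rfl
      have := hx.2
      simp at this
      linarith))
  have hba : 0 < b - a := sub_pos.2 hab
  refine ⟨min (c / 4) ((m - Φ x₀) / (b - a) ^ 2), ?_, ?_, ?_⟩
  · have : 0 < m - Φ x₀ := sub_pos.2 hm
    exact lt_min (by positivity) (by positivity)
  · exact (min_le_left _ _).trans (by linarith)
  · intro x hx
    rcases lt_or_ge |x - x₀| δ with h | h
    · have h1 := (abs_le.1 (hT x hx)).1
      have h2 : M * |x - x₀| ≤ c / 4 := by
        calc M * |x - x₀| ≤ (M + 1) * δ := by gcongr; linarith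
          _ = c / 4 := by rw [hδ]; field_simp
      have h3 : M * |x - x₀| ^ 3 ≤ c / 4 * (x - x₀) ^ 2 := by
        calc M * |x - x₀| ^ 3 = M * |x - x₀| * |x - x₀| ^ 2 := by ring
          _ ≤ c / 4 * |x - x₀| ^ 2 := by gcongr
          _ = _ := by rw [sq_abs]
      calc _ ≤ c / 4 * (x - x₀) ^ 2 := by gcongr; exact min_le_left _ _
        _ ≤ _ := by linarith
    · have h1 := hm' x ⟨hx, h⟩
      have h2 : (x - x₀) ^ 2 ≤ (b - a) ^ 2 := by
        rw [sq_le_sq, abs_of_pos hba, abs_le]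
        constructor <;> linarith [hx.1, hx.2, hx₀.1, hx₀.2]
      have : 0 < m - Φ x₀ := sub_pos.2 hm
      calc _ ≤ (m - Φ x₀) / (b - a) ^ 2 * (b - a) ^ 2 := by
            gcongr; exact min_le_right _ _
        _ = m - Φ x₀ := by field_simp
        _ ≤ _ := by linarith

lemma abs_exp_neg_sub_le {u v w : ℝ} (hu : w ≤ u) (hv : w ≤ v) :
    |Real.exp (-u) - Real.exp (-v)| ≤ |u - v| * Real.exp (-w) := by
  wlog h : u ≤ v generalizing u v
  · rw [abs_sub_comm, abs_sub_comm u]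
    exact this hv hu (le_of_not_ge h)
  have h1 : Real.exp (-v) ≤ Real.exp (-u) := Real.exp_le_exp.2 (by linarith)
  rw [abs_of_nonneg (by linarith), abs_sub_comm, abs_of_nonneg (by linarith : 0 ≤ v - u)]
  have h2 : Real.exp (-v) = Real.exp (-u) * Real.exp (u - v) := by
    rw [← Real.exp_add]; ring_nf
  have h3 := Real.add_one_le_exp (u - v)
  have h4 : Real.exp (-u) ≤ Real.exp (-w) := Real.exp_le_exp.2 (by linarith)
  calc Real.exp (-u) - Real.exp (-v) = (1 - Real.exp (u - v)) * Real.exp (-u) := by rw [h2]; ring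
    _ ≤ (v - u) * Real.exp (-u) :=
        mul_le_mul_of_nonneg_right (by linarith) (Real.exp_pos _).le
    _ ≤ _ := mul_le_mul_of_nonneg_left h4 (by linarith)

lemma mul_exp_neg_le (w : ℝ) : w * Real.exp (-w) ≤ 2 * Real.exp (-(w / 2)) := by
  have h : Real.exp (-(w / 2)) = Real.exp (w / 2) * Real.exp (-w) := by
    rw [← Real.exp_add]; ring_nf
  rw [h, ← mul_assoc]
  gcongr
  linarith [Real.add_one_le_exp (w / 2)]

/-- The integrand, extended by zero outside `[a, b]`, differs from the Gaussian by at most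
`K |x - x₀| e^{-s k (x - x₀)²}` on the whole line, with `K` and `k` independent of `s`. -/
lemma pointwise_bound {a b x₀ : ℝ} {Φ ψ : ℝ → ℝ}
    (hΦ : ContDiffOn ℝ (⊤ : ℕ∞) Φ (Icc a b)) (hψ : ContDiffOn ℝ (⊤ : ℕ∞) ψ (Icc a b))
    (hx₀ : x₀ ∈ Ioo a b) (hΦ' : deriv Φ x₀ = 0) (hΦ'' : 0 < deriv (deriv Φ) x₀)
    (hmin : ∀ x ∈ Icc a b, x ≠ x₀ → Φ x₀ < Φ x) :
    ∃ K ≥ (0 : ℝ), ∃ k > (0 : ℝ), ∀ s > (0 : ℝ), ∀ x : ℝ,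
      |(Icc a b).indicator (fun x => Real.exp (-(s * (Φ x - Φ x₀))) * ψ x) x -
        ψ x₀ * Real.exp (-(s * (deriv (deriv Φ) x₀ / 2 * (x - x₀) ^ 2)))| ≤
      K * (|x - x₀| * Real.exp (-(s * k) * (x - x₀) ^ 2)) := by
  have hab : a < b := hx₀.1.trans hx₀.2
  have hx₀' := Ioo_subset_Icc_self hx₀
  obtain ⟨L, hL0, hL⟩ := lipschitz_at hab hx₀' (hψ.of_le (by norm_cast))
  obtain ⟨M, hM0, hM⟩ := taylor_two_bound hΦ hx₀ hΦ'
  obtain ⟨k, hk0, hkc, hk⟩ :=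
    quadratic_lower_bound hΦ.continuousOn hab hx₀' hΦ'' hM0 hM hmin
  set c := deriv (deriv Φ) x₀
  set d := min (x₀ - a) (b - x₀)
  have hd : 0 < d := lt_min (sub_pos.2 hx₀.1) (sub_pos.2 hx₀.2)
  refine ⟨L + 2 * |ψ x₀| * M / k + |ψ x₀| / d, by positivity, k / 2, by positivity, ?_⟩
  intro s hs x
  set w := s * (k * (x - x₀) ^ 2) with hw
  have hw0 : 0 ≤ w := by positivity
  have hv : w ≤ s * (c / 2 * (x - x₀) ^ 2) := by rw [hw]; gcongr
  have hexp : -(s * (k / 2)) * (x - x₀) ^ 2 = -(w / 2) := by rw [hw]; ring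
  have hwe : Real.exp (-w) ≤ Real.exp (-(w / 2)) := Real.exp_le_exp.2 (by linarith)
  rw [hexp]
  by_cases hx : x ∈ Icc a b
  · rw [indicator_of_mem hx]
    have hu : w ≤ s * (Φ x - Φ x₀) := by rw [hw]; exact mul_le_mul_of_nonneg_left (hk x hx) hs.le
    set u := s * (Φ x - Φ x₀) with hu'
    set v := s * (c / 2 * (x - x₀) ^ 2) with hv'
    have huv : |u - v| ≤ s * (M * |x - x₀| ^ 3) := by
      rw [hu', hv', ← mul_sub, abs_mul, abs_of_pos hs]
      gcongr; exact hM x hx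
    have h1 : |ψ x - ψ x₀| * Real.exp (-u) ≤ L * |x - x₀| * Real.exp (-(w / 2)) := by
      gcongr
      · exact hL x hx
      · linarith
    have h2 : |Real.exp (-u) - Real.exp (-v)| ≤
        2 * M / k * |x - x₀| * Real.exp (-(w / 2)) := by
      calc _ ≤ |u - v| * Real.exp (-w) := abs_exp_neg_sub_le hu hv
        _ ≤ s * (M * |x - x₀| ^ 3) * Real.exp (-w) := by gcongr
        _ = M / k * |x - x₀| * (w * Real.exp (-w)) := by
            rw [hw, ← sq_abs (x - x₀)]; field_simp
        _ ≤ M / k * |x - x₀| * (2 * Real.exp (-(w / 2))) := 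
            mul_le_mul_of_nonneg_left (mul_exp_neg_le w) (by positivity)
        _ = _ := by ring
    have h3 : |ψ x₀| * |Real.exp (-u) - Real.exp (-v)| ≤
        |ψ x₀| * (2 * M / k * |x - x₀| * Real.exp (-(w / 2))) := by gcongr
    have h4 : 0 ≤ |ψ x₀| / d * (|x - x₀| * Real.exp (-(w / 2))) := by positivity
    calc |Real.exp (-u) * ψ x - ψ x₀ * Real.exp (-v)|
        = |(ψ x - ψ x₀) * Real.exp (-u) + ψ x₀ * (Real.exp (-u) - Real.exp (-v))| := by
          congr 1; ring
      _ ≤ |ψ x - ψ x₀| * Real.exp (-u) + |ψ x₀| * |Real.exp (-u) - Real.exp (-v)| := by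
          refine (abs_add_le _ _).trans (le_of_eq ?_)
          rw [abs_mul, abs_mul, Real.abs_exp]
      _ ≤ L * |x - x₀| * Real.exp (-(w / 2)) +
          |ψ x₀| * (2 * M / k * |x - x₀| * Real.exp (-(w / 2))) +
          |ψ x₀| / d * (|x - x₀| * Real.exp (-(w / 2))) := by linarith
      _ = _ := by ring
  · rw [indicator_of_notMem hx, zero_sub, abs_neg, abs_mul, Real.abs_exp]
    have hdx : d ≤ |x - x₀| := by
      rw [mem_Icc, not_and_or, not_le, not_le] at hx
      rcases hx with hx | hx
      · exact (min_le_left _ _).trans (by rw [abs_sub_comm]; exact le_trans (by linarith) (le_abs_self _))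
      · exact (min_le_right _ _).trans (le_trans (by linarith) (le_abs_self _))
    have h1 : 1 ≤ |x - x₀| / d := (one_le_div hd).2 hdx
    have h0 : 0 ≤ (L + 2 * |ψ x₀| * M / k) * (|x - x₀| * Real.exp (-(w / 2))) := by positivity
    calc _ ≤ |ψ x₀| * 1 * Real.exp (-(w / 2)) := by
          rw [mul_one]; gcongr; linarith
      _ ≤ |ψ x₀| * (|x - x₀| / d) * Real.exp (-(w / 2)) := by gcongr
      _ = |ψ x₀| / d * (|x - x₀| * Real.exp (-(w / 2))) := by ring
      _ ≤ _ := by rw [add_mul]; linarith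

lemma integrable_abs_mul_gaussian (x₀ : ℝ) {r : ℝ} (hr : 0 < r) :
    Integrable fun x : ℝ => |x - x₀| * Real.exp (-r * (x - x₀) ^ 2) := by
  have := ((integrable_mul_exp_neg_mul_sq hr).abs).comp_sub_right x₀
  simpa [abs_mul] using this

lemma integral_abs_mul_gaussian_scale (x₀ k : ℝ) {s : ℝ} (hs : 0 < s) :
    ∫ x : ℝ, |x - x₀| * Real.exp (-(s * k) * (x - x₀) ^ 2) =
      (∫ t : ℝ, |t| * Real.exp (-k * t ^ 2)) / s := by
  rw [integral_sub_right_eq_self (fun y : ℝ => |y| * Real.exp (-(s * k) * y ^ 2)) x₀]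
  have hq : 0 < √s := Real.sqrt_pos.2 hs
  have h := Measure.integral_comp_mul_right (fun t : ℝ => |t| * Real.exp (-k * t ^ 2)) √s
  have h2 : ∀ y : ℝ, |y * √s| * Real.exp (-k * (y * √s) ^ 2) =
      √s * (|y| * Real.exp (-(s * k) * y ^ 2)) := by
    intro y
    rw [abs_mul, abs_of_pos hq, mul_pow, Real.sq_sqrt hs.le]
    ring_nf
  simp_rw [h2] at h
  rw [integral_const_mul, abs_of_pos (inv_pos.2 hq), smul_eq_mul] at h
  rw [eq_div_iff hs.ne']
  calc _ = √s * (√s * ∫ y : ℝ, |y| * Real.exp (-(s * k) * y ^ 2)) := by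
        rw [← mul_assoc, Real.mul_self_sqrt hs.le, mul_comm]
    _ = _ := by rw [h, mul_inv_cancel_left₀ hq.ne']

/-- Laplace's method: if `Φ, ψ` are smooth on `[a,b]` and `Φ` has a nondegenerate interior
minimum at `x₀`, then `∫ₐᵇ e^{−sΦ(x)}ψ(x) dx = e^{−sΦ(x₀)}[A s^{−1/2} + O(s^{−1})]` as
`s → ∞`, where `A = √(2π)·ψ(x₀)·(Φ″(x₀))^{−1/2}`. -/
theorem laplace_method (a b : ℝ) (hab : a < b) (Φ ψ : ℝ → ℝ)
    (hΦ : ContDiffOn ℝ (⊤ : ℕ∞) Φ (Set.Icc a b)) (hψ : ContDiffOn ℝ (⊤ : ℕ∞) ψ (Set.Icc a b))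
    (x₀ : ℝ) (hx₀ : x₀ ∈ Set.Ioo a b)
    (hΦ' : deriv Φ x₀ = 0) (hΦ'' : 0 < deriv (deriv Φ) x₀)
    (hmin : ∀ x ∈ Set.Icc a b, x ≠ x₀ → Φ x₀ < Φ x) :
    ∃ C > (0 : ℝ), ∃ s₀ > (0 : ℝ), ∀ s : ℝ, s₀ ≤ s →
      |Real.exp (s * Φ x₀) * (∫ x in a..b, Real.exp (-s * Φ x) * ψ x) -
        Real.sqrt (2 * Real.pi) * ψ x₀ * (deriv (deriv Φ) x₀) ^ (-(1 / 2) : ℝ) *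
          s ^ (-(1 / 2) : ℝ)| ≤ C / s := by
  obtain ⟨K, hK0, k, hk0, hK⟩ := pointwise_bound hΦ hψ hx₀ hΦ' hΦ'' hmin
  set c := deriv (deriv Φ) x₀
  set J := ∫ t : ℝ, |t| * Real.exp (-k * t ^ 2) with hJ
  have hJ0 : 0 ≤ J := integral_nonneg fun t => by positivity
  refine ⟨K * J + 1, by positivity, 1, one_pos, fun s hs1 => ?_⟩
  have hs : 0 < s := one_pos.trans_le hs1
  have hint : Real.exp (s * Φ x₀) * (∫ x in a..b, Real.exp (-s * Φ x) * ψ x) =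
      ∫ x, (Icc a b).indicator (fun x => Real.exp (-(s * (Φ x - Φ x₀))) * ψ x) x := by
    rw [integral_indicator measurableSet_Icc, integral_Icc_eq_integral_Ioc,
      ← intervalIntegral.integral_of_le hab.le, ← intervalIntegral.integral_const_mul]
    congr 1
    ext x
    rw [← mul_assoc, ← Real.exp_add]
    ring_nf
  have hexp : ∀ x : ℝ, -(s * (c / 2 * (x - x₀) ^ 2)) = -(s * c / 2) * (x - x₀) ^ 2 := by
    intro x; ring
  have hgauss : Real.sqrt (2 * Real.pi) * ψ x₀ * c ^ (-(1 / 2) : ℝ) * s ^ (-(1 / 2) : ℝ) =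
      ∫ x : ℝ, ψ x₀ * Real.exp (-(s * (c / 2 * (x - x₀) ^ 2))) := by
    simp_rw [hexp]
    rw [integral_const_mul,
      integral_sub_right_eq_self (fun y : ℝ => Real.exp (-(s * c / 2) * y ^ 2)) x₀,
      integral_gaussian, Real.rpow_neg hΦ''.le, Real.rpow_neg hs.le, ← Real.sqrt_eq_rpow,
      ← Real.sqrt_eq_rpow, show Real.pi / (s * c / 2) = 2 * Real.pi / (s * c) by field_simp,
      Real.sqrt_div (by positivity), Real.sqrt_mul hs.le]
    field_simp
  have hi1 : Integrable
      ((Icc a b).indicator (fun x => Real.exp (-(s * (Φ x - Φ x₀))) * ψ x)) := by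
    rw [integrable_indicator_iff measurableSet_Icc]
    apply ContinuousOn.integrableOn_Icc
    have h1 := hΦ.continuousOn
    have h2 := hψ.continuousOn
    fun_prop
  have hi2 : Integrable fun x : ℝ => ψ x₀ * Real.exp (-(s * (c / 2 * (x - x₀) ^ 2))) := by
    simp_rw [hexp]
    exact ((integrable_exp_neg_mul_sq (by positivity : 0 < s * c / 2)).comp_sub_right x₀).const_mul _
  rw [hint, hgauss, ← integral_sub hi1 hi2]
  rw [← Real.norm_eq_abs]
  refine (norm_integral_le_of_norm_le
    ((integrable_abs_mul_gaussian x₀ (by positivity : 0 < s * k)).const_mul K)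
    (Filter.Eventually.of_forall fun x => (Real.norm_eq_abs _).trans_le (hK s hs x))).trans ?_
  rw [integral_const_mul, integral_abs_mul_gaussian_scale x₀ k hs, ← mul_div_assoc]
  exact div_le_div_of_nonneg_right (by linarith) hs.le
end

section
/- For every α > 0, the following asymptotic formula holds as y → ∞: ∫_{−π/2}^{π/2} exp(2α·√y·(cos θ − 1)) dθ = (√π/√α)·y^{−1/4} + O(y^{−1/2}). -/
/-!
Put `s = α√y`. Since `cos θ - 1 ≈ -θ²/2`, the integrand is close to the Gaussian `exp (-s θ²)`, whose
integral over `ℝ` is `√(π/s) = (√π/√α) y^{-1/4}`. So it suffices that the integrand, cut off to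
`(-π/2, π/2]`, differs from the Gaussian by at most `(128/s) / (1 + θ²)` for every real `θ`, as this
majorant has integral `128π/s = (128π/α) y^{-1/2}`.

Inside the interval (`exp_cos_sub_gaussian_bound`), `0 ≤ cos θ - 1 + θ²/2 ≤ θ⁴/2` together with
`cos θ - 1 ≤ -θ²/8` bounds the difference by `s θ⁴ exp (-s θ²/4) = t² exp (-t/4) / s ≤ 32/s`, where
`t = s θ²`. Outside it, the Gaussian itself is at most `1/(s θ²)`.
-/

lemma cos_sub_one_add_le (θ : ℝ) : Real.cos θ - 1 + θ ^ 2 / 2 ≤ θ ^ 4 / 2 := by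
  rcases le_total |θ| 1 with h | h
  · have h1 := (abs_le.1 (Real.cos_bound h)).2
    have h2 : |θ| ^ 4 = θ ^ 4 := (by decide : Even 4).pow_abs θ
    rw [h2] at h1
    nlinarith [pow_nonneg (abs_nonneg θ) 4]
  · have h1 := Real.cos_le_one θ
    have h2 : 1 ≤ θ ^ 2 := by rw [← sq_abs]; nlinarith
    nlinarith

lemma sq_mul_exp_neg_le {t : ℝ} (ht : 0 ≤ t) : t ^ 2 * Real.exp (-(t / 4)) ≤ 32 := by
  have h := Real.quadratic_le_exp_of_nonneg (by positivity : 0 ≤ t / 4)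
  rw [Real.exp_neg, ← div_eq_mul_inv, div_le_iff₀ (Real.exp_pos _)]
  nlinarith

lemma exp_cos_sub_gaussian_bound {s θ : ℝ} (hs : 0 < s) (hθ : |θ| ≤ Real.pi / 2) :
    |Real.exp (2 * s * (Real.cos θ - 1)) - Real.exp (-s * θ ^ 2)| ≤
      128 / s * (1 + θ ^ 2)⁻¹ := by
  have hpi := Real.pi_pos
  have hpi4 := Real.pi_lt_d2
  have hlow := Real.one_sub_sq_div_two_le_cos (x := θ)
  have hup := cos_sub_one_add_le θ
  have hcos : Real.cos θ - 1 ≤ -(θ ^ 2 / 8) := by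
    have h1 := Real.cos_le_one_sub_mul_cos_sq (x := θ) (by linarith)
    have h2 : (1 / 8 : ℝ) ≤ 2 / Real.pi ^ 2 := by
      rw [div_le_div_iff₀ (by norm_num) (by positivity)]; nlinarith
    nlinarith [mul_le_mul_of_nonneg_right h2 (sq_nonneg θ)]
  have hθ2 : 1 + θ ^ 2 ≤ 4 := by
    rw [← sq_abs]; nlinarith [abs_nonneg θ]
  have hmono : Real.exp (-s * θ ^ 2) ≤ Real.exp (2 * s * (Real.cos θ - 1)) :=
    Real.exp_le_exp.2 (by nlinarith)
  rw [abs_of_nonneg (sub_nonneg.2 hmono)]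
  set a := 2 * s * (Real.cos θ - 1) with ha
  -- convexity of `exp`: `e^a - e^b ≤ (a - b) e^a`
  have hconv : Real.exp a - Real.exp (-s * θ ^ 2) ≤ (a + s * θ ^ 2) * Real.exp a := by
    have h := Real.add_one_le_exp (-s * θ ^ 2 - a)
    have e : Real.exp (-s * θ ^ 2) = Real.exp a * Real.exp (-s * θ ^ 2 - a) := by
      rw [← Real.exp_add]; ring_nf
    rw [e]
    nlinarith [mul_le_mul_of_nonneg_left h (Real.exp_pos a).le]
  have hgap : a + s * θ ^ 2 ≤ s * θ ^ 4 := by rw [ha]; nlinarith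
  have hexp : Real.exp a ≤ Real.exp (-(s * θ ^ 2 / 4)) :=
    Real.exp_le_exp.2 (by rw [ha]; nlinarith)
  calc Real.exp a - Real.exp (-s * θ ^ 2) ≤ (a + s * θ ^ 2) * Real.exp a := hconv
    _ ≤ s * θ ^ 4 * Real.exp (-(s * θ ^ 2 / 4)) := by gcongr
    _ = (s * θ ^ 2) ^ 2 * Real.exp (-(s * θ ^ 2 / 4)) / s := by field_simp
    _ ≤ 32 / s := by gcongr; exact sq_mul_exp_neg_le (by positivity)
    _ = 128 / s * 4⁻¹ := by ring
    _ ≤ 128 / s * (1 + θ ^ 2)⁻¹ := by gcongr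

lemma gaussian_tail_bound {s θ : ℝ} (hs : 0 < s) (hθ : 1 ≤ θ ^ 2) :
    Real.exp (-s * θ ^ 2) ≤ 128 / s * (1 + θ ^ 2)⁻¹ := by
  have h := Real.add_one_le_exp (s * θ ^ 2)
  have h0 : 0 < s * θ ^ 2 := by positivity
  rw [neg_mul, Real.exp_neg, ← div_eq_mul_inv, div_div, inv_eq_one_div,
    div_le_div_iff₀ (Real.exp_pos _) (by positivity)]
  nlinarith

open MeasureTheory Set in
lemma abs_integral_exp_cos_sub_le {s : ℝ} (hs : 0 < s) :
    |(∫ θ in (-(Real.pi / 2))..(Real.pi / 2), Real.exp (2 * s * (Real.cos θ - 1))) -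
      Real.sqrt (Real.pi / s)| ≤ 128 / s * Real.pi := by
  have hpi := Real.pi_gt_three
  have hmaj : ∫ θ : ℝ, 128 / s * (1 + θ ^ 2)⁻¹ = 128 / s * Real.pi := by
    rw [integral_const_mul, integral_univ_inv_one_add_sq]
  rw [intervalIntegral.integral_of_le (by linarith), ← integral_indicator measurableSet_Ioc,
    ← integral_gaussian, ← integral_sub, ← hmaj, ← Real.norm_eq_abs]
  · refine norm_integral_le_of_norm_le (integrable_inv_one_add_sq.const_mul _)
      (Filter.Eventually.of_forall fun θ => ?_)
    rw [Real.norm_eq_abs]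
    by_cases hθ : θ ∈ Ioc (-(Real.pi / 2)) (Real.pi / 2)
    · rw [indicator_of_mem hθ]
      exact exp_cos_sub_gaussian_bound hs (abs_le.2 ⟨hθ.1.le, hθ.2⟩)
    · rw [indicator_of_notMem hθ, zero_sub, abs_neg, abs_of_pos (Real.exp_pos _)]
      refine gaussian_tail_bound hs ?_
      rw [mem_Ioc, not_and_or, not_lt, not_le] at hθ
      rcases hθ with h | h <;> nlinarith
  · rw [integrable_indicator_iff measurableSet_Ioc]
    exact (Continuous.integrableOn_Icc (by fun_prop)).mono_set Ioc_subset_Icc_self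
  · exact integrable_exp_neg_mul_sq hs


/-- For every `α > 0`, as `y → ∞`,
`∫_{−π/2}^{π/2} exp(2α√y(cos θ − 1)) dθ = (√π/√α)·y^{−1/4} + O(y^{−1/2})`. -/
theorem integral_exp_cos_asymptotics (α : ℝ) (hα : 0 < α) :
    ∃ C > (0 : ℝ), ∃ y₀ > (0 : ℝ), ∀ y : ℝ, y₀ ≤ y →
      |(∫ θ in (-(Real.pi / 2))..(Real.pi / 2),
          Real.exp (2 * α * Real.sqrt y * (Real.cos θ - 1))) -
        Real.sqrt Real.pi / Real.sqrt α * y ^ (-(1 / 4) : ℝ)| ≤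
      C * y ^ (-(1 / 2) : ℝ) := by
  refine ⟨128 * Real.pi / α, by positivity, 1, one_pos, fun y hy => ?_⟩
  have hy0 : 0 < y := by linarith
  have hmain : Real.sqrt (Real.pi / (α * Real.sqrt y)) =
      Real.sqrt Real.pi / Real.sqrt α * y ^ (-(1 / 4) : ℝ) := by
    rw [Real.sqrt_div Real.pi_pos.le, Real.sqrt_mul hα.le, ← div_div, div_eq_mul_inv _ (√√y),
      Real.rpow_neg hy0.le, Real.sqrt_eq_rpow (√y), Real.sqrt_eq_rpow y, ← Real.rpow_mul hy0.le]
    norm_num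
  have herr : 128 / (α * Real.sqrt y) * Real.pi = 128 * Real.pi / α * y ^ (-(1 / 2) : ℝ) := by
    rw [Real.rpow_neg hy0.le, ← Real.sqrt_eq_rpow]
    field_simp
  have h := abs_integral_exp_cos_sub_le (mul_pos hα (Real.sqrt_pos.2 hy0))
  rw [hmain, herr] at h
  simpa only [mul_assoc] using h
end

section
/- Let h : (0, ∞) → [0, ∞) be Borel measurable and define its Laplace transform L(λ) = ∫₀^∞ e^{−λy}·h(y) dy ∈ [0, ∞] for λ > 0. If ∫₁^∞ L(λ) dλ < ∞, then ∫₀^s y^{−1}·h(y) dy < ∞ for every s > 0. -/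
/-!
By Tonelli and `∫₁^∞ e^{-ly} dl = e^{-y} / y`, the hypothesis says that
`∫₀^∞ (e^{-y} / y) h(y) dy < ∞`. On `(0, s)` we have `y⁻¹ ≤ e^s (e^{-y} / y)`, so the integral of
`y⁻¹ h(y)` over `(0, s)` is at most `e^s` times a finite quantity.
-/

open MeasureTheory in
lemma lintegral_exp_neg_mul_Ioi_one {y : ℝ} (hy : 0 < y) :
    ∫⁻ l in Set.Ioi (1 : ℝ), ENNReal.ofReal (Real.exp (-l * y))
      = ENNReal.ofReal (Real.exp (-y) / y) := by
  have hcomm : ∀ l : ℝ, -l * y = -y * l := fun l => by ring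
  simp only [hcomm]
  rw [← ofReal_integral_eq_lintegral_ofReal
      (integrableOn_exp_mul_Ioi (neg_lt_zero.mpr hy) 1)
      (Filter.Eventually.of_forall fun l => (Real.exp_pos _).le),
    integral_exp_mul_Ioi (neg_lt_zero.mpr hy)]
  simp

/-- If the Laplace transform `L(λ) = ∫₀^∞ e^{−λy} h(y) dy` of a nonnegative Borel function
`h` on `(0,∞)` is integrable over `(1,∞)`, then `∫₀^s y⁻¹ h(y) dy < ∞` for every `s > 0`. -/
theorem integrable_inv_mul_of_laplace_integrable (h : ℝ → ℝ) (hmeas : Measurable h)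
    (hnonneg : ∀ y ∈ Set.Ioi (0 : ℝ), 0 ≤ h y)
    (hL : (∫⁻ l in Set.Ioi (1 : ℝ),
        ∫⁻ y in Set.Ioi (0 : ℝ), ENNReal.ofReal (Real.exp (-l * y) * h y)) < ⊤) :
    ∀ s > (0 : ℝ),
      (∫⁻ y in Set.Ioo (0 : ℝ) s, ENNReal.ofReal (y⁻¹ * h y)) < ⊤ := by
  intro s hs
  rw [MeasureTheory.lintegral_lintegral_swap
    (by unfold Function.uncurry; exact Measurable.aemeasurable (by fun_prop))] at hL
  have key : ∀ y ∈ Set.Ioi (0 : ℝ),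
      ∫⁻ l in Set.Ioi (1 : ℝ), ENNReal.ofReal (Real.exp (-l * y) * h y)
        = ENNReal.ofReal (Real.exp (-y) / y * h y) := by
    intro y hy
    simp only [ENNReal.ofReal_mul (Real.exp_pos _).le]
    rw [MeasureTheory.lintegral_mul_const _ (by fun_prop), lintegral_exp_neg_mul_Ioi_one hy,
      ENNReal.ofReal_mul (div_nonneg (Real.exp_pos _).le (le_of_lt hy))]
  rw [MeasureTheory.setLIntegral_congr_fun measurableSet_Ioi key] at hL
  calc ∫⁻ y in Set.Ioo (0 : ℝ) s, ENNReal.ofReal (y⁻¹ * h y)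
      ≤ ∫⁻ y in Set.Ioo (0 : ℝ) s,
          ENNReal.ofReal (Real.exp s) * ENNReal.ofReal (Real.exp (-y) / y * h y) := by
        refine MeasureTheory.setLIntegral_mono' measurableSet_Ioo fun y hy => ?_
        rw [← ENNReal.ofReal_mul (Real.exp_pos _).le]
        apply ENNReal.ofReal_le_ofReal
        have h1 : 1 ≤ Real.exp s * Real.exp (-y) := by
          rw [← Real.exp_add]
          exact Real.one_le_exp (by linarith [hy.2])
        have h2 : 0 ≤ y⁻¹ * h y := mul_nonneg (inv_nonneg.mpr hy.1.le) (hnonneg y hy.1)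
        calc y⁻¹ * h y ≤ (Real.exp s * Real.exp (-y)) * (y⁻¹ * h y) :=
              le_mul_of_one_le_left h2 h1
          _ = Real.exp s * (Real.exp (-y) / y * h y) := by ring
    _ = ENNReal.ofReal (Real.exp s) *
          ∫⁻ y in Set.Ioo (0 : ℝ) s, ENNReal.ofReal (Real.exp (-y) / y * h y) :=
        MeasureTheory.lintegral_const_mul' _ _ ENNReal.ofReal_ne_top
    _ ≤ ENNReal.ofReal (Real.exp s) *
          ∫⁻ y in Set.Ioi (0 : ℝ), ENNReal.ofReal (Real.exp (-y) / y * h y) := by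
        gcongr
        exact Set.Ioo_subset_Ioi_self
    _ < ⊤ := ENNReal.mul_lt_top ENNReal.ofReal_lt_top hL
end

section
/- Let t > 0 and s ≥ 0, and let r = r_s be the smallest positive real zero of Φ_s(x) = x·cos x + s·sin x. For 0 < λ < 4r²/t², set w(λ) = (t/2)·√(4r²/t² − λ). Then lim_{λ→0⁺} λ·w(λ)/Φ_s(w(λ)) = 8r² / (t²·|(1 + s)·cos r − r·sin r|). -/
/-!
Write `Φ x = x * cos x + s * sin x` and `w lam = (t / 2) * √(4 r² / t² - lam)`, so that `w 0 = r` and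
`Φ (w 0) = 0`. The quotient is therefore `w lam` divided by the slope of `Φ ∘ w` between `0` and
`lam`, and its limit is `r / (Φ' r * w' 0)` with `w' 0 = -t² / (8 r)`, provided `Φ' r ≠ 0`.

In fact `Φ' r = (1 + s) * cos r - r * sin r` is negative. Since `Φ (π / 2) = s ≥ 0 > -π = Φ π`, the
least positive zero `r` lies in `(0, π)`, so `sin r > 0`; then `r * cos r = -s * sin r` forces
`cos r ≤ 0`.
-/

open Filter Topology

/-- The least positive zero lies before `π`, because `Φ` changes sign on `[π / 2, π]`. -/
lemma leastZero_lt_pi {s r : ℝ} (hs : 0 ≤ s)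
    (hr : IsLeast {x : ℝ | 0 < x ∧ x * Real.cos x + s * Real.sin x = 0} r) : r < Real.pi := by
  have hpi := Real.pi_pos
  have hc : ContinuousOn (fun x : ℝ => x * Real.cos x + s * Real.sin x)
      (Set.Icc (Real.pi / 2) Real.pi) := by fun_prop
  obtain ⟨x, hx, hx0⟩ := intermediate_value_Icc' (by linarith) hc
    (show (0 : ℝ) ∈ Set.Icc _ _ by constructor <;> simp <;> linarith)
  have hx0' : x * Real.cos x + s * Real.sin x = 0 := hx0
  have hle : r ≤ x := hr.2 ⟨by linarith [hx.1], hx0'⟩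
  refine lt_of_le_of_ne (hle.trans hx.2) ?_
  rintro rfl
  have h := hr.1.2
  simp at h

lemma deriv_at_leastZero_neg {s r : ℝ} (hs : 0 ≤ s)
    (hr : IsLeast {x : ℝ | 0 < x ∧ x * Real.cos x + s * Real.sin x = 0} r) :
    (1 + s) * Real.cos r - r * Real.sin r < 0 := by
  have hr0 : 0 < r := hr.1.1
  have hsin : 0 < Real.sin r := Real.sin_pos_of_pos_of_lt_pi hr0 (leastZero_lt_pi hs hr)
  have hcos : Real.cos r ≤ 0 := by
    by_contra! h
    have h0 := hr.1.2
    have := mul_pos hr0 h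
    have := mul_nonneg hs hsin.le
    linarith
  have h1 := mul_pos hr0 hsin
  have h2 : (1 + s) * Real.cos r ≤ 0 := mul_nonpos_of_nonneg_of_nonpos (by linarith) hcos
  linarith

/-- Residue computation: with `r = r_s` the smallest positive zero of
`Φ_s(x) = x·cos x + s·sin x` and `w(λ) = (t/2)·√(4r²/t² − λ)`, one has
`lim_{λ→0⁺} λ·w(λ)/Φ_s(w(λ)) = 8r²/(t²·|(1+s)·cos r − r·sin r|)`. -/
theorem residue_limit_lambda_w_over_phi (t s : ℝ) (ht : 0 < t) (hs : 0 ≤ s) (r : ℝ)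
    (hr : IsLeast {x : ℝ | 0 < x ∧ x * Real.cos x + s * Real.sin x = 0} r) :
    Tendsto (fun lam : ℝ =>
        lam * ((t / 2) * Real.sqrt (4 * r ^ 2 / t ^ 2 - lam)) /
          (((t / 2) * Real.sqrt (4 * r ^ 2 / t ^ 2 - lam)) *
              Real.cos ((t / 2) * Real.sqrt (4 * r ^ 2 / t ^ 2 - lam)) +
            s * Real.sin ((t / 2) * Real.sqrt (4 * r ^ 2 / t ^ 2 - lam))))
      (𝓝[>] 0)
      (𝓝 (8 * r ^ 2 / (t ^ 2 * |(1 + s) * Real.cos r - r * Real.sin r|))) := by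
  have hr0 : 0 < r := hr.1.1
  have hD := deriv_at_leastZero_neg hs hr
  set D := (1 + s) * Real.cos r - r * Real.sin r with hDdef
  set w : ℝ → ℝ := fun lam => (t / 2) * Real.sqrt (4 * r ^ 2 / t ^ 2 - lam) with hw
  have hsq : Real.sqrt (4 * r ^ 2 / t ^ 2) = 2 * r / t := by
    rw [show 4 * r ^ 2 / t ^ 2 = (2 * r / t) ^ 2 by ring]
    exact Real.sqrt_sq (by positivity)
  have hw0 : w 0 = r := by
    simp only [hw, sub_zero, hsq]
    field_simp
  have hwd : HasDerivAt w (-t ^ 2 / (8 * r)) 0 := by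
    have h1 : HasDerivAt (fun lam : ℝ => 4 * r ^ 2 / t ^ 2 - lam) (-1) 0 :=
      (hasDerivAt_id (0 : ℝ)).const_sub _
    have hne : 4 * r ^ 2 / t ^ 2 - 0 ≠ 0 := by
      rw [sub_zero]
      positivity
    refine ((h1.sqrt hne).const_mul (t / 2)).congr_deriv ?_
    rw [sub_zero, hsq]
    field_simp
    norm_num
  have hΦ : HasDerivAt (fun x : ℝ => x * Real.cos x + s * Real.sin x) D (w 0) := by
    rw [hw0]
    refine (((hasDerivAt_id r).mul (Real.hasDerivAt_cos r)).add
      ((Real.hasDerivAt_sin r).const_mul s)).congr_deriv ?_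
    simp only [hDdef, id]
    ring
  have hslope := (hasDerivAt_iff_tendsto_slope.1 (hΦ.comp (0 : ℝ) hwd)).mono_left
    (nhdsWithin_mono (0 : ℝ) (fun x (hx : 0 < x) => hx.ne'))
  have hwt : Tendsto w (𝓝[>] 0) (𝓝 r) := by
    simpa only [hw0] using hwd.continuousAt.tendsto.mono_left nhdsWithin_le_nhds
  have hlim := hwt.div hslope
    (mul_ne_zero hD.ne (div_ne_zero (neg_ne_zero.2 (by positivity)) (by positivity)))
  have hval : r / (D * (-t ^ 2 / (8 * r))) = 8 * r ^ 2 / (t ^ 2 * |D|) := by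
    rw [abs_of_neg hD]
    have := hD.ne
    field_simp
  rw [hval] at hlim
  refine hlim.congr fun lam => ?_
  -- The base point contributes nothing to the slope, as `Φ (w 0) = Φ r = 0`.
  simp only [Pi.div_apply, slope_def_field, Function.comp_apply, hw0, hr.1.2, sub_zero]
  rw [div_div_eq_mul_div, mul_comm (w lam) lam]
end

section
/- Let t > 0, c > 0, y₀ > 0, and b ≤ 0. Set s = t·|b|/2 and let r = r_s be the smallest positive real zero of Φ_s(x) = x·cos x + s·sin x. For 0 < λ < 4r²/t², set w(λ) = (t/2)·√(4r²/t² − λ) and F(λ) = t·y₀·(4r²/t² + b² − λ)·sin(w(λ)) / (2c²·Φ_s(w(λ))). Then lim_{λ→0⁺} λ·F(λ) = α, where α = 4·y₀·r·sin(r)·(b² + 4r²/t²) / (c²·t·|(1 + s)·cos r − r·sin r|), and α > 0. -/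
open Filter Topology

/-!
With `s ≥ 0`, the function `Φ_s(x) = x cos x + s sin x` is positive on `(0, π/2)` and negative at
`π`, so its smallest positive zero `r` lies in `[π/2, π)`. There `sin r > 0` and `cos r ≤ 0`, hence
`Φ_s'(r) = (1 + s) cos r - r sin r < 0`: the zero is simple, and the absolute value in `α` equals
`-Φ_s'(r)`. Since `w(0) = r` and `w'(0) = -t² / (8r)`, the function `λ ↦ Φ_s(w(λ))` vanishes at `0`
with derivative `-Φ_s'(r) t² / (8r) ≠ 0`, so `λ / Φ_s(w(λ))` tends to the inverse of this
derivative; multiplying by the continuous remaining factor gives the limit.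
-/

/-- The smallest positive zero of `x cos x + s sin x` lies in `[π/2, π)`: positivity on `(0, π/2)`
gives the lower bound, a sign change on `[π/2, π]` the upper one. -/
lemma isLeast_zero_bounds {s r : ℝ} (hs : 0 ≤ s)
    (hr : IsLeast {x : ℝ | 0 < x ∧ x * Real.cos x + s * Real.sin x = 0} r) :
    Real.pi / 2 ≤ r ∧ r < Real.pi := by
  obtain ⟨⟨hr0, hrz⟩, hmin⟩ := hr
  have hpi := Real.pi_pos
  constructor
  · by_contra! h
    have h1 : 0 < Real.cos r := Real.cos_pos_of_mem_Ioo ⟨by linarith, h⟩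
    have h2 : 0 < Real.sin r := Real.sin_pos_of_pos_of_lt_pi hr0 (by linarith)
    have h3 := mul_pos hr0 h1
    have h4 := mul_nonneg hs h2.le
    linarith
  · have hcont : ContinuousOn (fun x : ℝ => x * Real.cos x + s * Real.sin x)
        (Set.Icc (Real.pi / 2) Real.pi) := by fun_prop
    have hmem : (0 : ℝ) ∈ Set.Icc (Real.pi * Real.cos Real.pi + s * Real.sin Real.pi)
        (Real.pi / 2 * Real.cos (Real.pi / 2) + s * Real.sin (Real.pi / 2)) := by
      simp [hs, hpi.le]
    obtain ⟨x, hx, hxz⟩ := intermediate_value_Icc' (by linarith) hcont hmem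
    have hle : r ≤ Real.pi := (hmin ⟨by linarith [hx.1], hxz⟩).trans hx.2
    refine lt_of_le_of_ne hle ?_
    rintro rfl
    simp at hrz

/-- Residue of the exponent function in the Heston model: with `s = t|b|/2`, `r = r_s` the
smallest positive zero of `Φ_s`, `w(λ) = (t/2)·√(4r²/t² − λ)` and
`F(λ) = t·y₀·(4r²/t² + b² − λ)·sin(w(λ))/(2c²·Φ_s(w(λ)))`, one has
`lim_{λ→0⁺} λ·F(λ) = α` where
`α = 4y₀·r·sin r·(b² + 4r²/t²)/(c²·t·|(1+s)·cos r − r·sin r|) > 0`. -/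
theorem residue_limit_lambda_F (t c y₀ b : ℝ) (ht : 0 < t) (hc : 0 < c) (hy₀ : 0 < y₀)
    (hb : b ≤ 0) (r : ℝ)
    (hr : IsLeast {x : ℝ | 0 < x ∧
      x * Real.cos x + (t * |b| / 2) * Real.sin x = 0} r) :
    Tendsto (fun lam : ℝ =>
        lam * (t * y₀ * (4 * r ^ 2 / t ^ 2 + b ^ 2 - lam) *
            Real.sin ((t / 2) * Real.sqrt (4 * r ^ 2 / t ^ 2 - lam)) /
          (2 * c ^ 2 *
            (((t / 2) * Real.sqrt (4 * r ^ 2 / t ^ 2 - lam)) *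
                Real.cos ((t / 2) * Real.sqrt (4 * r ^ 2 / t ^ 2 - lam)) +
              (t * |b| / 2) * Real.sin ((t / 2) * Real.sqrt (4 * r ^ 2 / t ^ 2 - lam))))))
      (𝓝[>] 0)
      (𝓝 (4 * y₀ * r * Real.sin r * (b ^ 2 + 4 * r ^ 2 / t ^ 2) /
        (c ^ 2 * t * |(1 + t * |b| / 2) * Real.cos r - r * Real.sin r|))) ∧
    0 < 4 * y₀ * r * Real.sin r * (b ^ 2 + 4 * r ^ 2 / t ^ 2) /
        (c ^ 2 * t * |(1 + t * |b| / 2) * Real.cos r - r * Real.sin r|) := by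
  have hs : 0 ≤ t * |b| / 2 := by positivity
  obtain ⟨hlo, hhi⟩ := isLeast_zero_bounds hs hr
  obtain ⟨⟨hr0, hrz⟩, -⟩ := hr
  generalize t * |b| / 2 = s at hs hrz ⊢
  have hsin : 0 < Real.sin r := Real.sin_pos_of_pos_of_lt_pi hr0 hhi
  have hcos : Real.cos r ≤ 0 :=
    Real.cos_nonpos_of_pi_div_two_le_of_le hlo (by linarith [Real.pi_pos])
  set P : ℝ := (1 + s) * Real.cos r - r * Real.sin r with hP
  have hPneg : P < 0 := by
    have h1 := mul_pos hr0 hsin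
    have h2 := mul_nonneg (by linarith : 0 ≤ 1 + s) (neg_nonneg.2 hcos)
    linarith
  rw [abs_of_neg hPneg]
  have hP' : 0 < -P := by linarith
  refine ⟨?_, by positivity⟩
  set w : ℝ → ℝ := fun lam => (t / 2) * Real.sqrt (4 * r ^ 2 / t ^ 2 - lam) with hw
  have hsq : Real.sqrt (4 * r ^ 2 / t ^ 2 - 0) = 2 * r / t := by
    rw [sub_zero, show 4 * r ^ 2 / t ^ 2 = (2 * r / t) ^ 2 by ring]
    exact Real.sqrt_sq (by positivity)
  have hw0 : w 0 = r := by
    simp only [hw, hsq]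
    field_simp
  have hwd : HasDerivAt w (-t ^ 2 / (8 * r)) 0 := by
    have h := ((((hasDerivAt_id (0 : ℝ)).const_sub (4 * r ^ 2 / t ^ 2)).sqrt
      (by simp only [id, sub_zero]; positivity)).const_mul (t / 2))
    refine HasDerivAt.congr_deriv (f := w) h ?_
    simp only [id, hsq]
    field_simp
    norm_num
  have hΦd : HasDerivAt (fun x : ℝ => x * Real.cos x + s * Real.sin x) P (w 0) := by
    rw [hw0]
    have h := ((hasDerivAt_id r).mul (Real.hasDerivAt_cos r)).add
      ((Real.hasDerivAt_sin r).const_mul s)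
    refine HasDerivAt.congr_deriv (f := fun x : ℝ => x * Real.cos x + s * Real.sin x) h ?_
    simp only [hP, id]
    ring
  have hG := (hΦd.comp (0 : ℝ) hwd).tendsto_slope_zero_right
  simp only [Function.comp_def, zero_add, hw0, hrz, sub_zero, smul_eq_mul] at hG
  have hD : P * (-t ^ 2 / (8 * r)) ≠ 0 :=
    mul_ne_zero hPneg.ne (div_ne_zero (neg_ne_zero.2 (by positivity)) (by positivity))
  have hGinv := hG.inv₀ hD
  have hN : Tendsto (fun lam : ℝ =>
      t * y₀ * (4 * r ^ 2 / t ^ 2 + b ^ 2 - lam) * Real.sin (w lam) / (2 * c ^ 2)) (𝓝[>] 0)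
      (𝓝 (t * y₀ * (4 * r ^ 2 / t ^ 2 + b ^ 2 - 0) * Real.sin (w 0) / (2 * c ^ 2))) := by
    refine Tendsto.mono_left (Continuous.tendsto ?_ 0) nhdsWithin_le_nhds
    fun_prop
  convert hN.mul hGinv using 2
  · have hfold : ∀ x, (t / 2) * Real.sqrt (4 * r ^ 2 / t ^ 2 - x) = w x := fun _ => rfl
    simp only [hfold]
    simp only [mul_inv, inv_inv, div_eq_mul_inv]
    ring
  · rw [hw0]
    have := hPneg.ne
    field_simp
    ring
end

section
/- Let a₁ > a₂ > 0 and let B, c be real numbers. Then, as k → ∞, √(a₁·k − B·√k + c·log k) − √(a₂·k − B·√k + c·log k) = (√a₁ − √a₂)·√k + (B/2)·(1/√a₂ − 1/√a₁) + (c/2)·(1/√a₁ − 1/√a₂)·(log k)/√k + O(k^{−1/2}). -/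
/-!
With `s = √k` and `T = -B s + c log k`, each square root is `√(a s² + T)`, where `|T| ≤ N s` for
`N = |B| + 2|c|`, because `log k = 2 log s ≤ 2 s`. The two-term approximation
`P = √a s + T / (2 √a s)` satisfies `a s² + T - P² = -T² / (4 a s²)`, which is bounded, while
`√(a s² + T) + P` is of order `s`. Dividing gives `√(a s² + T) = P + O(1/s)`
(`abs_sqrt_sub_le`), and subtracting the expansions for `a₁` and `a₂` gives the result.
-/

/-- First-order expansion of `√(a s² + T)` around `√a s`, with an explicit `O(1/s)` error
when `T` is of size at most `N s` and `s ≥ N / a`. -/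
lemma abs_sqrt_sub_le {a N s T : ℝ} (ha : 0 < a) (hs : 0 < s) (hT : |T| ≤ N * s)
    (hN : N ≤ a * s) :
    |Real.sqrt (a * s ^ 2 + T) - (Real.sqrt a * s + T / (2 * Real.sqrt a * s))| ≤
      N ^ 2 / (2 * a * Real.sqrt a) / s := by
  obtain ⟨r, hr, rfl⟩ : ∃ r : ℝ, 0 < r ∧ a = r ^ 2 :=
    ⟨Real.sqrt a, Real.sqrt_pos.2 ha, (Real.sq_sqrt ha.le).symm⟩
  rw [Real.sqrt_sq hr.le]
  have hT' := abs_le.1 hT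
  have hNs : N * s ≤ r ^ 2 * s * s := mul_le_mul_of_nonneg_right hN hs.le
  have hX : 0 ≤ r ^ 2 * s ^ 2 + T := by nlinarith
  have hP : r * s / 2 ≤ r * s + T / (2 * r * s) := by
    have : -(r * s / 2) ≤ T / (2 * r * s) := by
      rw [le_div_iff₀ (by positivity)]
      nlinarith
    linarith
  have hTsq : T ^ 2 ≤ (N * s) ^ 2 := sq_le_sq' hT'.1 hT'.2
  set P := r * s + T / (2 * r * s) with hPdef
  set Y := Real.sqrt (r ^ 2 * s ^ 2 + T) with hY
  have hYsq : Y ^ 2 = r ^ 2 * s ^ 2 + T := Real.sq_sqrt hX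
  have hY0 : 0 ≤ Y := Real.sqrt_nonneg _
  have hprod : (Y - P) * (Y + P) = -(T ^ 2 / (4 * r ^ 2 * s ^ 2)) := by
    have : (Y - P) * (Y + P) = Y ^ 2 - P ^ 2 := by ring
    rw [this, hYsq, hPdef]
    field_simp
    ring
  have hsum : r * s / 2 ≤ Y + P := by linarith
  have hrs : 0 < r * s / 2 := by positivity
  have habs : |Y - P| * (Y + P) ≤ N ^ 2 / (4 * r ^ 2) := by
    rw [← abs_of_pos (hrs.trans_le hsum), ← abs_mul, hprod, abs_neg,
      abs_of_nonneg (by positivity), div_le_div_iff₀ (by positivity) (by positivity)]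
    nlinarith [mul_le_mul_of_nonneg_right hTsq (show 0 ≤ 4 * r ^ 2 by positivity)]
  have hmul : |Y - P| * (r * s / 2) ≤ N ^ 2 / (4 * r ^ 2) :=
    (mul_le_mul_of_nonneg_left hsum (abs_nonneg _)).trans habs
  calc |Y - P| ≤ N ^ 2 / (4 * r ^ 2) / (r * s / 2) := (le_div_iff₀ hrs).2 hmul
    _ = N ^ 2 / (2 * r ^ 2 * r) / s := by
      field_simp
      norm_num

/-- Asymptotic expansion of the difference of square roots appearing in the implied
volatility asymptotics: for `a₁ > a₂ > 0` and reals `B`, `c`, as `k → ∞`,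
`√(a₁k − B√k + c·log k) − √(a₂k − B√k + c·log k)
  = (√a₁ − √a₂)√k + (B/2)(1/√a₂ − 1/√a₁) + (c/2)(1/√a₁ − 1/√a₂)(log k)/√k + O(k^{−1/2})`. -/
theorem sqrt_difference_expansion (a₁ a₂ B c : ℝ) (h₂ : 0 < a₂) (h₁ : a₂ < a₁) :
    ∃ C > (0 : ℝ), ∃ k₀ > (0 : ℝ), ∀ k : ℝ, k₀ ≤ k →
      |Real.sqrt (a₁ * k - B * Real.sqrt k + c * Real.log k) -
          Real.sqrt (a₂ * k - B * Real.sqrt k + c * Real.log k) -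
        ((Real.sqrt a₁ - Real.sqrt a₂) * Real.sqrt k +
          B / 2 * (1 / Real.sqrt a₂ - 1 / Real.sqrt a₁) +
          c / 2 * (1 / Real.sqrt a₁ - 1 / Real.sqrt a₂) * Real.log k / Real.sqrt k)| ≤
      C * k ^ (-(1 / 2) : ℝ) := by
  have ha₁ : 0 < a₁ := h₂.trans h₁
  have hr₁ := Real.sqrt_pos.2 ha₁
  have hr₂ := Real.sqrt_pos.2 h₂
  obtain ⟨N, hNdef⟩ : ∃ N : ℝ, N = |B| + 2 * |c| := ⟨_, rfl⟩
  have hN0 : 0 ≤ N := by rw [hNdef]; positivity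
  refine ⟨N ^ 2 / (2 * a₁ * Real.sqrt a₁) + N ^ 2 / (2 * a₂ * Real.sqrt a₂) + 1, by positivity,
    1 + (N / a₂) ^ 2, by positivity, fun k hk => ?_⟩
  have hk1 : 1 ≤ k := by nlinarith [sq_nonneg (N / a₂)]
  have hk0 : 0 < k := by linarith
  have hpow : k ^ (-(1 / 2) : ℝ) = 1 / Real.sqrt k := by
    rw [Real.rpow_neg hk0.le, ← Real.sqrt_eq_rpow, one_div]
  rw [hpow]
  have hs : 0 < Real.sqrt k := Real.sqrt_pos.2 hk0
  have hsk : Real.sqrt k ^ 2 = k := Real.sq_sqrt hk0.le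
  have hlog0 : 0 ≤ Real.log k := Real.log_nonneg hk1
  have hlog : Real.log k ≤ 2 * Real.sqrt k := by
    have h := Real.log_sqrt hk0.le
    have h' := Real.log_le_sub_one_of_pos hs
    linarith
  have hNs₂ : N ≤ a₂ * Real.sqrt k := by
    have : N / a₂ ≤ Real.sqrt k := Real.le_sqrt_of_sq_le (by linarith)
    rwa [div_le_iff₀' h₂] at this
  have hNs₁ : N ≤ a₁ * Real.sqrt k := by nlinarith
  generalize Real.log k = L at *
  generalize Real.sqrt k = s at *
  subst hsk
  have hT : |-B * s + c * L| ≤ N * s := by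
    calc |-B * s + c * L| ≤ |-B * s| + |c * L| := abs_add_le _ _
      _ = |B| * s + |c| * L := by
        rw [abs_mul, abs_mul, abs_neg, abs_of_pos hs, abs_of_nonneg hlog0]
      _ ≤ |B| * s + |c| * (2 * s) := by gcongr
      _ = N * s := by rw [hNdef]; ring
  have e₁ := abs_sqrt_sub_le ha₁ hs hT hNs₁
  have e₂ := abs_sqrt_sub_le h₂ hs hT hNs₂
  have hX : ∀ a : ℝ, a * s ^ 2 - B * s + c * L = a * s ^ 2 + (-B * s + c * L) := fun a => by ring
  rw [hX, hX]
  generalize Real.sqrt (a₁ * s ^ 2 + (-B * s + c * L)) = Y₁ at *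
  generalize Real.sqrt (a₂ * s ^ 2 + (-B * s + c * L)) = Y₂ at *
  have hsplit : Y₁ - Y₂ - ((Real.sqrt a₁ - Real.sqrt a₂) * s +
        B / 2 * (1 / Real.sqrt a₂ - 1 / Real.sqrt a₁) +
        c / 2 * (1 / Real.sqrt a₁ - 1 / Real.sqrt a₂) * L / s) =
      (Y₁ - (Real.sqrt a₁ * s + (-B * s + c * L) / (2 * Real.sqrt a₁ * s))) -
        (Y₂ - (Real.sqrt a₂ * s + (-B * s + c * L) / (2 * Real.sqrt a₂ * s))) := by
    field_simp
    ring
  rw [hsplit]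
  refine (abs_sub _ _).trans ((add_le_add e₁ e₂).trans ?_)
  have : 0 < 1 / s := by positivity
  rw [add_mul, add_mul, mul_one_div, mul_one_div]
  linarith
end

section
/- Let s ≥ −1 be a real number. Then every complex zero of the entire function ρ_s(z) = z·cosh z + s·sinh z is purely imaginary; that is, if z ∈ ℂ satisfies z·cosh z + s·sinh z = 0, then Re z = 0. -/
/-!
Write `z = x + iy`. Eliminating `s` between the real and imaginary parts of
`z cosh z + s sinh z = 0` leaves `y sinh 2x = x sin 2y`. As `ρ_s` is odd, suppose `x > 0`. Then
`sinh 2x > 2x` while `|sin 2y| ≤ 2|y|`, which forces `y = 0`, so `z` is a positive real zero.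
For `s ≥ -1` there is none, because `sinh x < x cosh x` when `x > 0`.
-/

theorem sinh_lt_mul_cosh {x : ℝ} (hx : 0 < x) : Real.sinh x < x * Real.cosh x := by
  -- The mean value theorem bounds the slope of `sinh` on `[0, x]` by its derivative at `x`.
  obtain ⟨c, ⟨hc0, hcx⟩, hc⟩ := exists_deriv_eq_slope Real.sinh hx
    Real.continuous_sinh.continuousOn Real.differentiable_sinh.differentiableOn
  rw [Real.deriv_sinh, Real.sinh_zero, sub_zero, sub_zero, eq_div_iff hx.ne'] at hc
  have hlt : Real.cosh c < Real.cosh x := by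
    rw [Real.cosh_lt_cosh, abs_of_pos hc0, abs_of_pos hx]
    exact hcx
  nlinarith

theorem not_zero_of_re_pos (s : ℝ) (hs : -1 ≤ s) (z : ℂ)
    (hz : z * Complex.cosh z + (s : ℂ) * Complex.sinh z = 0) : ¬ 0 < z.re := by
  intro hx
  obtain ⟨x, y⟩ := z
  simp only at hx
  have hzxy : (⟨x, y⟩ : ℂ) = x + y * Complex.I := Complex.mk_eq_add_mul_I x y
  rw [hzxy, Complex.cosh_add, Complex.sinh_add, Complex.cosh_mul_I, Complex.sinh_mul_I,
    ← Complex.ofReal_cosh, ← Complex.ofReal_sinh, ← Complex.ofReal_cos,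
    ← Complex.ofReal_sin] at hz
  have hre := congrArg Complex.re hz
  have him := congrArg Complex.im hz
  simp only [Complex.add_re, Complex.add_im, Complex.mul_re, Complex.mul_im, Complex.ofReal_re,
    Complex.ofReal_im, Complex.I_re, Complex.I_im, Complex.zero_re, Complex.zero_im] at hre him
  have key : y * Real.sinh (2 * x) = x * Real.sin (2 * y) := by
    rw [Real.sinh_two_mul, Real.sin_two_mul]
    linear_combination (-2 * Real.cosh x * Real.sin y) * hre
      + (2 * Real.sinh x * Real.cos y) * him
      + (2 * x * Real.cos y * Real.sin y) * Real.cosh_sq x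
      - (2 * y * Real.sinh x * Real.cosh x) * Real.sin_sq_add_cos_sq y
  have hsinh : 2 * x < Real.sinh (2 * x) := Real.self_lt_sinh_iff.2 (by linarith)
  have hy : y = 0 := by
    by_contra hy
    have hy' : 0 < |y| := abs_pos.2 hy
    have habs := congrArg abs key
    rw [abs_mul, abs_mul, abs_of_pos hx, abs_of_pos (by linarith : 0 < Real.sinh (2 * x))] at habs
    have hsin : |Real.sin (2 * y)| ≤ 2 * |y| := by
      have h : |Real.sin (2 * y)| ≤ |2 * y| := Real.abs_sin_le_abs
      rwa [abs_mul, abs_two] at h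
    nlinarith [mul_lt_mul_of_pos_left hsinh hy', mul_le_mul_of_nonneg_left hsin hx.le]
  subst hy
  simp only [Real.cos_zero, Real.sin_zero] at hre
  have hpos : 0 < Real.sinh x := Real.sinh_pos_iff.2 hx
  nlinarith [sinh_lt_mul_cosh hx]

/-- Every complex zero of the entire function `ρ_s(z) = z·cosh z + s·sinh z`, for real
`s ≥ -1`, is purely imaginary. -/
theorem zeros_of_zcoshz_add_s_sinhz_are_imaginary (s : ℝ) (hs : -1 ≤ s) (z : ℂ)
    (hz : z * Complex.cosh z + (s : ℂ) * Complex.sinh z = 0) : z.re = 0 := by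
  have hneg : -z * Complex.cosh (-z) + (s : ℂ) * Complex.sinh (-z) = 0 := by
    rw [Complex.cosh_neg, Complex.sinh_neg]
    linear_combination -hz
  have h1 := not_zero_of_re_pos s hs z hz
  have h2 := not_zero_of_re_pos s hs (-z) hneg
  rw [Complex.neg_re] at h2
  linarith
end
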